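/- A directed path graph contains no strong asteroidal triple. -/

import Mathlib

/-!
Let `T` be a clique directed path tree of `G`, and `a, b, c` an asteroidal triple. The subtrees of
`a, b, c` have a median node `M`: the directions from `M` towards the three subtrees are pairwise
distinct (`exists_median`), and since each pair is joined by a walk avoiding the closed
neighbourhood of the third vertex, `M` contains none of `a, b, c` (`notMem_of_between`). Two of the
three edges of `T` at `M` in these directions are oriented alike, both into `M` or both out of `M`.
So it suffices to show that two vertices `u, v` linked by a strong path are never separated by a
node `Q` at which the orientation changes on the way from `u` to `v` (`not_linked`). Reversing all
edges, one may assume that both edges `N₁Q`, `N₂Q` point into `Q` (`not_linked_of_in`).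

No vertex lies in both `N₁` and `N₂`, which excludes a common neighbour of `u` and `v`, and forces
each of the two chordless paths to have consecutive vertices `x i ∈ N₁ ∩ Q`, `x (i+1) ∈ Q ∩ N₂`,
respectively `y j`, `y (j+1)` (`IsPathSeq.turn`). These four vertices lie in `Q`, so they carry an
attachment. The cliques containing a given vertex form a chain under directed reachability
(`CliqueDPT.chain`), and membership of a vertex is convex along it (`CliqueDPT.convex`).

* An attachment of type 1 yields maximal cliques containing `l1, l2, r1` but not `r2`, and
  `l1, r1, r2` but not `l2`. Both lie beyond `Q` on the chain of `l1`; whichever comes first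
  contradicts convexity (`not_attach1`).
* In an attachment of type 2, let `R` be a maximal clique containing the large clique and `K k` one
  containing `z' k, z k, z (k+1)`. Convexity makes the `K k` lie alternately before and behind `R`
  (`alternate`), so by parity one of the two end cliques lies before `R`. That end clique then lies
  even before `N₁` (or `N₂`), so the subtree of the inner vertex `z 1` (or `z (2t+1)`) reaches far
  towards `u` (or `v`). As this vertex has no neighbours on the two paths except the four given
  ones, the edge by which one enters its subtree from `u` is covered by both left vertices, and
  the end clique would have to contain the second left vertex, which it does not
  (`attach2_end`, `not_attach2`).
-/

open SimpleGraph

variable {V : Type*}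

/-- A graph is chordal if it contains no induced cycle of length at least four. -/
def IsChordal (G : SimpleGraph V) : Prop :=
  ∀ n : ℕ, 4 ≤ n → IsEmpty (SimpleGraph.cycleGraph n ↪g G)

/-- `S` separates `u` from `v`: every walk from `u` to `v` meets `S`, and `u, v ∉ S`. -/
def IsSeparator (G : SimpleGraph V) (u v : V) (S : Set V) : Prop :=
  u ∉ S ∧ v ∉ S ∧ ∀ p : G.Walk u v, ∃ x ∈ p.support, x ∈ S

/-- A `{u,v}`-separator: a separator of `u,v` minimal with this property. -/
def IsMinUVSeparator (G : SimpleGraph V) (u v : V) (S : Set V) : Prop :=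
  IsSeparator G u v S ∧ ∀ T, T ⊂ S → ¬ IsSeparator G u v T

/-- A minimal separator: a `{u,v}`-separator for some non-adjacent pair `u ≠ v`. -/
def IsMinimalSeparator (G : SimpleGraph V) (S : Set V) : Prop :=
  ∃ u v, u ≠ v ∧ ¬ G.Adj u v ∧ IsMinUVSeparator G u v S

/-- A maximal clique. -/
def IsMaxClique (G : SimpleGraph V) (Q : Set V) : Prop :=
  G.IsClique Q ∧ ∀ R, G.IsClique R → Q ⊆ R → Q = R

abbrev MaxClique (G : SimpleGraph V) := {Q : Set V // IsMaxClique G Q}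

/-- A clique tree of `G`: a tree on the maximal cliques of `G` such that for every
vertex `v` the maximal cliques containing `v` induce a (nonempty connected) subtree. -/
structure CliqueTree (G : SimpleGraph V) where
  tree : SimpleGraph (MaxClique G)
  isTree : tree.IsTree
  subtree : ∀ v : V, ((tree.induce {Q : MaxClique G | v ∈ Q.1})).Connected

/-- An asteroidal triple: three pairwise non-adjacent vertices such that any two are
joined by a path avoiding the closed neighborhood of the third. -/
def IsAsteroidalTriple (G : SimpleGraph V) (a b c : V) : Prop :=
  a ≠ b ∧ b ≠ c ∧ a ≠ c ∧ ¬ G.Adj a b ∧ ¬ G.Adj b c ∧ ¬ G.Adj a c ∧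
  (∃ p : G.Walk a b, ∀ x ∈ p.support, x ≠ c ∧ ¬ G.Adj c x) ∧
  (∃ p : G.Walk b c, ∀ x ∈ p.support, x ≠ a ∧ ¬ G.Adj a x) ∧
  (∃ p : G.Walk a c, ∀ x ∈ p.support, x ≠ b ∧ ¬ G.Adj b x)
/-- A chordless (induced) path `x 0 - x 1 - ⋯ - x n`: injective, with adjacency exactly
between consecutive vertices. -/
def IsChordlessPathFun (G : SimpleGraph V) {n : ℕ} (x : Fin (n+1) → V) : Prop :=
  Function.Injective x ∧ ∀ i j : Fin (n+1), i < j → (G.Adj (x i) (x j) ↔ (j : ℕ) = (i : ℕ) + 1)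

/-- Attachment of type 1 on `{l1,l2}, {r1,r2}` using vertices of `Z`. -/
def Attach1 (G : SimpleGraph V) (Z : Set V) (l1 l2 r1 r2 : V) : Prop :=
  ∃ z ∈ Z, ∃ z' ∈ Z, z ≠ z' ∧ ¬ G.Adj z z' ∧
    G.Adj z l1 ∧ G.Adj z l2 ∧ G.Adj z r1 ∧ ¬ G.Adj z r2 ∧
    G.Adj z' r1 ∧ G.Adj z' r2 ∧ G.Adj z' l1 ∧ ¬ G.Adj z' l2

/-- Attachment of type 2 on `{l1,l2}, {r1,r2}` using vertices of `Z`, relative to the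
set `P = X ∪ Y ∪ {u,v}` of path vertices.  Here `z 0 = l1`, `z (last) = r1` and the
interior values of `z` are the `2t+1` clique vertices; `z' k` sees exactly
`z k.castSucc` and `z k.succ`. -/
def Attach2 (G : SimpleGraph V) (Z P : Set V) (l1 l2 r1 r2 : V) : Prop :=
  ∃ (t : ℕ) (z : Fin (2*t+3) → V) (z' : Fin (2*t+2) → V),
    z 0 = l1 ∧ z (Fin.last (2*t+2)) = r1 ∧
    Function.Injective z ∧ Function.Injective z' ∧
    (∀ k : Fin (2*t+3), k ≠ 0 → k ≠ Fin.last (2*t+2) → z k ∈ Z) ∧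
    (∀ k, z' k ∈ Z) ∧
    G.IsClique ({l1, l2, r1, r2} ∪
      {w | ∃ k : Fin (2*t+3), k ≠ 0 ∧ k ≠ Fin.last (2*t+2) ∧ z k = w}) ∧
    (∀ k : Fin (2*t+3), k ≠ 0 → k ≠ Fin.last (2*t+2) → ∀ w ∈ P,
      (G.Adj (z k) w ↔ w = l1 ∨ w = l2 ∨ w = r1 ∨ w = r2)) ∧
    (∀ k m : Fin (2*t+2), k ≠ m → ¬ G.Adj (z' k) (z' m)) ∧
    (∀ k : Fin (2*t+2), ∀ w,
      w ∈ P ∪ ({l1, l2, r1, r2} ∪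
        {w | ∃ k : Fin (2*t+3), k ≠ 0 ∧ k ≠ Fin.last (2*t+2) ∧ z k = w}) →
      (G.Adj (z' k) w ↔ w = z k.castSucc ∨ w = z k.succ))

/-- Two non-adjacent vertices `u, v` are linked by a strong path: either they have a
common neighbor, or there are two chordless paths `u-x₁-⋯-x_r-v`, `u-y₁-⋯-y_s-v`
(`r,s ≥ 2`) with disjoint interiors, and a set `Z` disjoint from them, such that every
clique of size four `x_i, x_{i+1}, y_j, y_{j+1}` carries an attachment of type 1 or 2. -/
def LinkedByStrongPath (G : SimpleGraph V) (u v : V) : Prop :=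
  (∃ w, G.Adj u w ∧ G.Adj v w) ∨
  (∃ (r s : ℕ), 2 ≤ r ∧ 2 ≤ s ∧
    ∃ (x : Fin (r+2) → V) (y : Fin (s+2) → V) (Z : Set V),
      x 0 = u ∧ x (Fin.last (r+1)) = v ∧ y 0 = u ∧ y (Fin.last (s+1)) = v ∧
      IsChordlessPathFun G x ∧ IsChordlessPathFun G y ∧
      (∀ i : Fin (r+2), i ≠ 0 → i ≠ Fin.last (r+1) →
        ∀ j : Fin (s+2), j ≠ 0 → j ≠ Fin.last (s+1) → x i ≠ y j) ∧
      Z ∩ (Set.range x ∪ Set.range y) = ∅ ∧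
      ∀ i j : ℕ, ∀ _hi1 : 1 ≤ i, ∀ _hi2 : i + 1 ≤ r, ∀ _hj1 : 1 ≤ j, ∀ _hj2 : j + 1 ≤ s,
        G.Adj (x ⟨i, by omega⟩) (y ⟨j, by omega⟩) →
        G.Adj (x ⟨i, by omega⟩) (y ⟨j+1, by omega⟩) →
        G.Adj (x ⟨i+1, by omega⟩) (y ⟨j, by omega⟩) →
        G.Adj (x ⟨i+1, by omega⟩) (y ⟨j+1, by omega⟩) →
        ∃ l1 l2 r1 r2 : V,
          ((l1 = x ⟨i, by omega⟩ ∧ l2 = y ⟨j, by omega⟩) ∨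
           (l1 = y ⟨j, by omega⟩ ∧ l2 = x ⟨i, by omega⟩)) ∧
          ((r1 = x ⟨i+1, by omega⟩ ∧ r2 = y ⟨j+1, by omega⟩) ∨
           (r1 = y ⟨j+1, by omega⟩ ∧ r2 = x ⟨i+1, by omega⟩)) ∧
          (Attach1 G Z l1 l2 r1 r2 ∨
           Attach2 G Z (Set.range x ∪ Set.range y) l1 l2 r1 r2))

/-- A strong asteroidal triple: an asteroidal triple each pair of which is linked by a
strong path. -/
def IsStrongAsteroidalTriple (G : SimpleGraph V) (a b c : V) : Prop :=
  IsAsteroidalTriple G a b c ∧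
    LinkedByStrongPath G a b ∧ LinkedByStrongPath G b c ∧ LinkedByStrongPath G a c

/-- A weak asteroidal triple: an asteroidal triple some pair of which is linked by a
strong path. -/
def IsWeakAsteroidalTriple (G : SimpleGraph V) (a b c : V) : Prop :=
  IsAsteroidalTriple G a b c ∧
    (LinkedByStrongPath G a b ∨ LinkedByStrongPath G b c ∨ LinkedByStrongPath G a c)

/-- An asteroidal quadruple: four vertices any three of which form an asteroidal triple. -/
def IsAsteroidalQuadruple (G : SimpleGraph V) (a b c d : V) : Prop :=
  IsAsteroidalTriple G a b c ∧ IsAsteroidalTriple G a b d ∧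
  IsAsteroidalTriple G a c d ∧ IsAsteroidalTriple G b c d

/-- A weak asteroidal quadruple: four vertices any three of which form a weak
asteroidal triple. -/
def IsWeakAsteroidalQuadruple (G : SimpleGraph V) (a b c d : V) : Prop :=
  IsWeakAsteroidalTriple G a b c ∧ IsWeakAsteroidalTriple G a b d ∧
  IsWeakAsteroidalTriple G a c d ∧ IsWeakAsteroidalTriple G b c d

/-- A clique directed path tree: a clique tree together with an orientation `D` of its
edges such that for every vertex `w` of `G`, the cliques containing `w` form a directed
path. -/
structure CliqueDPT (G : SimpleGraph V) extends CliqueTree G where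
  D : MaxClique G → MaxClique G → Prop
  dadj : ∀ Q R, D Q R → tree.Adj Q R
  total : ∀ Q R, tree.Adj Q R → D Q R ∨ D R Q
  antisymm : ∀ Q R, D Q R → ¬ D R Q
  dirpath : ∀ w : V, ∃ (n : ℕ) (e : Fin (n+1) ≃ {Q : MaxClique G // w ∈ Q.1}),
    ∀ i : Fin n, D (e i.castSucc).1 (e i.succ).1

/-- A clique rooted path tree: a clique directed path tree whose orientation makes the
tree rooted (every clique is reachable from the root along directed edges). -/
structure CliqueRPT (G : SimpleGraph V) extends CliqueDPT G where
  root : MaxClique G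
  rooted : ∀ Q, Relation.ReflTransGen D root Q

/-- A directed path graph: a graph having a clique directed path tree. -/
def DirectedPathGraph (G : SimpleGraph V) : Prop := Nonempty (CliqueDPT G)

/-- A rooted path graph: a graph having a clique rooted path tree. -/
def RootedPathGraph (G : SimpleGraph V) : Prop := Nonempty (CliqueRPT G)

/-- `T(u,v)` is a directed path: the tree path between the closest cliques containing
`u` resp. `v` (characterized by: `u` only in its first vertex, `v` only in its last)
has all its edges oriented in the same direction. -/
def TuvDirected (G : SimpleGraph V) (T : CliqueDPT G) (u v : V) : Prop :=
  ∃ (n : ℕ) (p : Fin (n+1) → MaxClique G),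
    Function.Injective p ∧
    u ∈ (p 0).1 ∧ v ∈ (p (Fin.last n)).1 ∧
    (∀ i, i ≠ (0 : Fin (n+1)) → u ∉ (p i).1) ∧
    (∀ i, i ≠ Fin.last n → v ∉ (p i).1) ∧
    ((∀ i : Fin n, T.D (p i.castSucc) (p i.succ)) ∨
     (∀ i : Fin n, T.D (p i.succ) (p i.castSucc)))

/-! ### Sides of a tree edge, and medians -/

section Sides

variable {N : Type*}

/-- `OnSide T P Q X`: the node `X` lies on the side of `P` once the edge `PQ` is removed
from `T`. -/
def OnSide (T : SimpleGraph N) (P Q X : N) : Prop :=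
  (T.deleteEdges {s(P, Q)}).Reachable P X

lemma OnSide.refl (T : SimpleGraph N) (P Q : N) : OnSide T P Q P :=
  SimpleGraph.Reachable.refl _

lemma OnSide.step {T : SimpleGraph N} {P Q X Y : N} (h : OnSide T P Q X) (hXY : T.Adj X Y)
    (hne : s(X, Y) ≠ s(P, Q)) : OnSide T P Q Y := by
  refine SimpleGraph.Reachable.trans h (SimpleGraph.Adj.reachable ?_)
  simpa [SimpleGraph.deleteEdges_adj, hXY] using hne

lemma OnSide.not_both {T : SimpleGraph N} (hT : T.IsAcyclic) {P Q X : N} (hPQ : T.Adj P Q)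
    (h1 : OnSide T P Q X) (h2 : OnSide T Q P X) : False := by
  have hb := SimpleGraph.isAcyclic_iff_forall_isBridge.mp hT (e := s(P, Q)) hPQ
  rw [SimpleGraph.isBridge_iff] at hb
  unfold OnSide at h1 h2
  rw [Sym2.eq_swap (a := Q)] at h2
  exact hb (h1.trans h2.symm)

lemma OnSide.either {T : SimpleGraph N} (hT : T.Connected) (P Q X : N) :
    OnSide T P Q X ∨ OnSide T Q P X := by
  obtain ⟨p⟩ := hT.preconnected X P
  induction p with
  | nil => exact Or.inl (OnSide.refl _ _ _)
  | @cons A B P hAB _ ih =>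
    by_cases he : s(B, A) = s(P, Q)
    · rcases Sym2.eq_iff.mp he with ⟨_, rfl⟩ | ⟨_, rfl⟩
      · exact Or.inr (OnSide.refl _ _ _)
      · exact Or.inl (OnSide.refl _ _ _)
    · rcases ih with ih | ih
      · exact Or.inl (ih.step hAB.symm he)
      · exact Or.inr (ih.step hAB.symm (by rwa [Sym2.eq_swap (a := Q)]))

/-- A walk that avoids the node `M` stays on one side of every edge at `M`. -/
lemma OnSide.of_walk {T : SimpleGraph N} {P Q X Y M : N} (h : OnSide T P Q X)
    (hM : M = P ∨ M = Q) (p : T.Walk X Y) (hp : M ∉ p.support) : OnSide T P Q Y := by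
  induction p with
  | nil => exact h
  | @cons A B _ hAB p ih =>
    simp only [SimpleGraph.Walk.support_cons, List.mem_cons, not_or] at hp
    have hB : M ≠ B := fun e => hp.2 (e ▸ p.start_mem_support)
    refine ih (h.step hAB fun he => ?_) hp.2
    have : M ∈ s(A, B) := by rw [he]; simpa using hM
    rcases Sym2.mem_iff.mp this with e | e
    · exact hp.1 e
    · exact hB e

/-- The first edge by which a walk enters a set of nodes; the start of the walk lies on the
outer side of this edge. The walk may live in a subgraph `T'` of `T`. -/
lemma exists_first_entry {T T' : SimpleGraph N} (hle : T' ≤ T) {A B : N} (p : T'.Walk A B)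
    (I : N → Prop) (hA : ¬ I A) (hB : I B) :
    ∃ S' S, T.Adj S' S ∧ ¬ I S' ∧ I S ∧ OnSide T S' S A ∧ T'.Reachable A S' := by
  induction p with
  | nil => exact absurd hB hA
  | @cons A A1 _ hadj p ih =>
    by_cases h1 : I A1
    · exact ⟨A, A1, hle hadj, hA, h1, OnSide.refl _ _ _, SimpleGraph.Reachable.refl _⟩
    · obtain ⟨S', S, hS, hS', hIS, hside, hr⟩ := ih h1 hB
      refine ⟨S', S, hS, hS', hIS, hside.step (hle hadj).symm fun he => ?_,
        hadj.reachable.trans hr⟩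
      have : S ∈ s(A1, A) := by rw [he]; simp
      rcases Sym2.mem_iff.mp this with rfl | rfl
      · exact h1 hIS
      · exact hA hIS

/-- From a node `X` towards another node `Y`: the neighbour of `X` on the path to `Y`. -/
lemma exists_next {T : SimpleGraph N} (hT : T.Connected) {X Y : N} (hne : X ≠ Y) :
    ∃ M, T.Adj X M ∧ T.dist Y M < T.dist Y X ∧ ∃ p : T.Walk M Y, X ∉ p.support := by
  obtain ⟨p, hp⟩ := hT.exists_walk_length_eq_dist X Y
  have hpath := p.isPath_of_length_eq_dist hp
  cases p with
  | nil => exact absurd rfl hne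
  | @cons _ M _ h p =>
    refine ⟨M, h, ?_, p, ((SimpleGraph.Walk.cons_isPath_iff _ _).mp hpath).2⟩
    have := T.dist_le p
    rw [SimpleGraph.dist_comm (u := Y), SimpleGraph.dist_comm (u := Y), ← hp]
    simp only [SimpleGraph.Walk.length_cons]
    omega

/-- Existence of a median: a node from which the directions towards `A`, `B`, `C` are
pairwise distinct, as far as they are defined. -/
lemma exists_median {T : SimpleGraph N} (hT : T.Connected) (A B C : N) :
    ∃ M, ∀ M', T.Adj M M' →
      ¬ (T.dist A M' < T.dist A M ∧ T.dist B M' < T.dist B M) ∧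
      ¬ (T.dist A M' < T.dist A M ∧ T.dist C M' < T.dist C M) ∧
      ¬ (T.dist B M' < T.dist B M ∧ T.dist C M' < T.dist C M) := by
  let f : N → ℕ := fun M => T.dist A M + T.dist B M + T.dist C M
  have : Nonempty N := ⟨A⟩
  refine ⟨Function.argmin f, fun M' hM' => ?_⟩
  have hmin : f (Function.argmin f) ≤ f M' := Function.argmin_le f M'
  simp only [f] at hmin ⊢
  set M := Function.argmin f
  have tri : ∀ X, T.dist X M' ≤ T.dist X M + 1 := fun X => by
    have := hT.dist_triangle (u := X) (v := M) (w := M')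
    rwa [SimpleGraph.dist_eq_one_iff_adj.mpr hM'] at this
  have hA := tri A
  have hB := tri B
  have hC := tri C
  refine ⟨?_, ?_, ?_⟩ <;> rintro ⟨h1, h2⟩ <;> simp only [f, M] at * <;> omega

end Sides

/-! ### Maximal cliques as nodes, and vertices crossing a tree edge -/

section Nodes

variable {G : SimpleGraph V}

lemma exists_maxClique [Finite V] {S : Set V} (hS : G.IsClique S) :
    ∃ K : MaxClique G, S ⊆ K.1 := by
  obtain ⟨K, hSK, hK⟩ := Finite.exists_le_maximal (p := fun K : Set V => G.IsClique K) hS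
  exact ⟨⟨K, hK.prop, fun R hR hKR => hK.eq_of_subset hR hKR⟩, hSK⟩

lemma exists_node_of_adj [Finite V] {u v : V} (h : G.Adj u v) :
    ∃ K : MaxClique G, u ∈ K.1 ∧ v ∈ K.1 := by
  obtain ⟨K, hK⟩ := exists_maxClique (G := G) (S := {u, v})
    (SimpleGraph.isClique_pair.mpr fun _ => h)
  exact ⟨K, hK (by simp), hK (by simp)⟩

lemma eq_or_adj_of_mem {u v : V} (K : MaxClique G) (hu : u ∈ K.1) (hv : v ∈ K.1) :
    u = v ∨ G.Adj u v := by
  by_cases h : u = v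
  · exact Or.inl h
  · exact Or.inr (K.2.1 hu hv h)

/-- A vertex whose subtree meets both sides of an edge belongs to both ends of the edge. -/
lemma CliqueTree.mem_of_sides (T : CliqueTree G) {P Q X Y : MaxClique G} {w : V}
    (hPQ : T.tree.Adj P Q) (hX : w ∈ X.1) (hY : w ∈ Y.1) (hXP : OnSide T.tree P Q X)
    (hYQ : OnSide T.tree Q P Y) : w ∈ P.1 ∧ w ∈ Q.1 := by
  by_contra hcon
  obtain ⟨p⟩ := (T.subtree w).preconnected ⟨X, hX⟩ ⟨Y, hY⟩
  have key : ∀ (a b : {K : MaxClique G | w ∈ K.1}) (p : (T.tree.induce _).Walk a b),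
      OnSide T.tree P Q a.1 → OnSide T.tree P Q b.1 := by
    intro a b p
    induction p with
    | nil => exact id
    | @cons a b _ h p ih =>
      refine fun ha => ih (ha.step (SimpleGraph.induce_adj.mp h) fun he => hcon ?_)
      have ha' : w ∈ a.1.1 := a.2
      have hb' : w ∈ b.1.1 := b.2
      rcases Sym2.eq_iff.mp he with ⟨h1, h2⟩ | ⟨h1, h2⟩
      · rw [h1] at ha'; rw [h2] at hb'; exact ⟨ha', hb'⟩
      · rw [h1] at ha'; rw [h2] at hb'; exact ⟨hb', ha'⟩
  exact OnSide.not_both T.isTree.2 hPQ (key _ _ p hXP) hYQ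

/-- A sequence of consecutively intersecting subtrees leading from one side of an edge to the
other side has a member containing the edge. -/
lemma CliqueTree.exists_cross (T : CliqueTree G) {P Q A B : MaxClique G}
    (hPQ : T.tree.Adj P Q) (f : ℕ → V) {a b : ℕ} (hab : a ≤ b)
    (hf : ∀ k, a ≤ k → k < b → ∃ X : MaxClique G, f k ∈ X.1 ∧ f (k + 1) ∈ X.1)
    (hA : f a ∈ A.1) (hB : f b ∈ B.1)
    (hAP : OnSide T.tree P Q A) (hBQ : OnSide T.tree Q P B) :
    ∃ m, a ≤ m ∧ m ≤ b ∧ f m ∈ P.1 ∧ f m ∈ Q.1 := by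
  by_contra! hcon
  have key : ∀ k, a ≤ k → k ≤ b → ∃ X : MaxClique G, f k ∈ X.1 ∧ OnSide T.tree P Q X := by
    intro k hak
    induction k, hak using Nat.le_induction with
    | base => exact fun _ => ⟨A, hA, hAP⟩
    | succ k hak ih =>
      intro hkb
      obtain ⟨X, hX, hXP⟩ := ih (by omega)
      obtain ⟨Y, hY, hY'⟩ := hf k hak (by omega)
      rcases OnSide.either T.isTree.1 P Q Y with h | h
      · exact ⟨Y, hY', h⟩
      · obtain ⟨h1, h2⟩ := T.mem_of_sides hPQ hX hY hXP h
        exact absurd h2 (hcon k hak (by omega) h1)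
  obtain ⟨X, hX, hXP⟩ := key b hab le_rfl
  obtain ⟨h1, h2⟩ := T.mem_of_sides hPQ hX hB hXP hBQ
  exact hcon b hab le_rfl h1 h2

/-- The version of `CliqueTree.exists_cross` for walks of `G`. -/
lemma CliqueTree.exists_cross_walk [Finite V] (T : CliqueTree G) {P Q A B : MaxClique G}
    (hPQ : T.tree.Adj P Q) {u v : V} (p : G.Walk u v) (hA : u ∈ A.1) (hB : v ∈ B.1)
    (hAP : OnSide T.tree P Q A) (hBQ : OnSide T.tree Q P B) :
    ∃ w ∈ p.support, w ∈ P.1 ∧ w ∈ Q.1 := by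
  obtain ⟨m, -, -, h⟩ := T.exists_cross hPQ p.getVert (Nat.zero_le p.length)
    (fun k _ hk => exists_node_of_adj (p.adj_getVert_succ hk))
    (by simpa using hA) (by simpa using hB) hAP hBQ
  exact ⟨_, p.getVert_mem_support m, h⟩

end Nodes

/-! ### Directed reachability in a clique directed path tree -/

section Order

variable {G : SimpleGraph V}

/-- The clique directed path tree with all edges reversed. -/
def CliqueDPT.rev (T : CliqueDPT G) : CliqueDPT G where
  toCliqueTree := T.toCliqueTree
  D Q R := T.D R Q
  dadj Q R h := (T.dadj R Q h).symm
  total Q R h := (T.total Q R h).symm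
  antisymm Q R h := T.antisymm R Q h
  dirpath w := by
    obtain ⟨n, e, he⟩ := T.dirpath w
    refine ⟨n, Fin.revPerm.trans e, fun i => ?_⟩
    simpa [Fin.rev_succ, Fin.rev_castSucc] using he i.rev

/-- `T.Le A B`: there is a directed walk from `A` to `B`. -/
def CliqueDPT.Le (T : CliqueDPT G) (A B : MaxClique G) : Prop :=
  Relation.ReflTransGen T.D A B

/-- A directed walk starting with the edge `PQ` never comes back across this edge. -/
lemma CliqueDPT.onSide_of_le (T : CliqueDPT G) {P Q X : MaxClique G} (hPQ : T.D P Q)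
    (hX : T.Le Q X) : OnSide T.tree Q P X := by
  induction hX with
  | refl => exact OnSide.refl _ _ _
  | @tail Y Z _ hYZ ih =>
    refine ih.step (T.dadj _ _ hYZ) fun he => ?_
    rcases Sym2.eq_iff.mp he with ⟨rfl, rfl⟩ | ⟨rfl, rfl⟩
    · exact T.antisymm _ _ hPQ hYZ
    · exact OnSide.not_both T.isTree.2 (T.dadj _ _ hPQ) (OnSide.refl _ _ _) ih

lemma CliqueDPT.le_antisymm (T : CliqueDPT G) {A B : MaxClique G} (h1 : T.Le A B)
    (h2 : T.Le B A) : A = B := by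
  rcases Relation.ReflTransGen.cases_head h1 with h | ⟨A', hA, hA'⟩
  · exact h
  · exact (OnSide.not_both T.isTree.2 (T.dadj _ _ hA) (OnSide.refl _ _ _)
      (T.onSide_of_le hA (hA'.trans h2))).elim

/-- The cliques containing a vertex form a chain. -/
lemma CliqueDPT.chain (T : CliqueDPT G) {w : V} {A B : MaxClique G} (hA : w ∈ A.1)
    (hB : w ∈ B.1) : T.Le A B ∨ T.Le B A := by
  obtain ⟨n, e, he⟩ := T.dirpath w
  have key : ∀ i j : ℕ, i ≤ j → ∀ (hi : i < n + 1) (hj : j < n + 1),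
      T.Le (e ⟨i, hi⟩).1 (e ⟨j, hj⟩).1 := by
    intro i j hij
    induction j, hij using Nat.le_induction with
    | base => exact fun _ _ => Relation.ReflTransGen.refl
    | succ j _ ih =>
      exact fun hi hj => (ih hi (by omega)).tail (he ⟨j, by omega⟩)
  obtain ⟨i, hi⟩ := e.surjective ⟨A, hA⟩
  obtain ⟨j, hj⟩ := e.surjective ⟨B, hB⟩
  have hi' : (e i).1 = A := by rw [hi]
  have hj' : (e j).1 = B := by rw [hj]
  rw [← hi', ← hj']
  rcases le_total i j with h | h
  · exact Or.inl (key i j h i.2 j.2)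
  · exact Or.inr (key j i h j.2 i.2)

/-- The set of cliques containing a vertex is convex. -/
lemma CliqueDPT.convex (T : CliqueDPT G) {w : V} {A B C : MaxClique G} (hAC : T.Le A C)
    (hCB : T.Le C B) (hA : w ∈ A.1) (hB : w ∈ B.1) : w ∈ C.1 := by
  induction hAC using Relation.ReflTransGen.head_induction_on with
  | refl => exact hA
  | @head A A' hD hA'C ih =>
    exact ih (T.mem_of_sides (T.dadj _ _ hD) hA hB (OnSide.refl _ _ _)
      (T.onSide_of_le hD (Relation.ReflTransGen.trans hA'C hCB))).2

/-- Along the chain of `l`, the node `N` is the immediate predecessor of `Q`. -/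
lemma CliqueDPT.le_pred (T : CliqueDPT G) {l : V} {N Q R : MaxClique G} (hNQ : T.D N Q)
    (hlN : l ∈ N.1) (hlR : l ∈ R.1) (hRQ : T.Le R Q) : R = Q ∨ T.Le R N := by
  rcases T.chain hlR hlN with h | h
  · exact Or.inr h
  rcases Relation.ReflTransGen.cases_head h with h | ⟨X, hX, hXR⟩
  · exact Or.inr (h ▸ Relation.ReflTransGen.refl)
  by_cases hXQ : X = Q
  · subst hXQ
    exact Or.inl (T.le_antisymm hRQ hXR)
  · -- the directed walk `N, X, …, R, …, Q` competes with the edge `NQ`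
    refine (OnSide.not_both T.isTree.2 (T.dadj _ _ hX) ?_
      (T.onSide_of_le hX (Relation.ReflTransGen.trans hXR hRQ))).elim
    refine (OnSide.refl _ _ _).step (T.dadj _ _ hNQ) fun he => ?_
    rcases Sym2.eq_iff.mp he with ⟨_, h⟩ | ⟨h1, h2⟩
    · exact hXQ h.symm
    · have := T.dadj _ _ hNQ
      rw [h2] at this
      exact this.ne rfl

/-- No vertex belongs to two distinct in-neighbours of the same node. -/
lemma CliqueDPT.not_mem_of_in (T : CliqueDPT G) {w : V} {N₁ N₂ Q : MaxClique G}
    (h1 : T.D N₁ Q) (h2 : T.D N₂ Q) (hne : N₁ ≠ N₂) (hw1 : w ∈ N₁.1) : w ∉ N₂.1 := by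
  intro hw2
  rcases T.chain hw1 hw2 with h | h
  · rcases T.le_pred h1 hw1 hw2 (Relation.ReflTransGen.single h2) with e | e
    · exact (T.dadj _ _ h2).ne e
    · exact hne (T.le_antisymm h e)
  · rcases T.le_pred h2 hw2 hw1 (Relation.ReflTransGen.single h1) with e | e
    · exact (T.dadj _ _ h1).ne e
    · exact hne (T.le_antisymm e h)

/-- If `l` enters `Q` through `N` and `r` does not, then all other common nodes of `l` and
`r` lie beyond `Q`. -/
lemma CliqueDPT.le_of_not_mem (T : CliqueDPT G) {l r : V} {N Q R : MaxClique G}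
    (hNQ : T.D N Q) (hlN : l ∈ N.1) (hlQ : l ∈ Q.1) (hlR : l ∈ R.1) (hrN : r ∉ N.1)
    (hrQ : r ∈ Q.1) (hrR : r ∈ R.1) : T.Le Q R := by
  rcases T.chain hlQ hlR with h | h
  · exact h
  rcases T.le_pred hNQ hlN hlR h with e | e
  · exact e ▸ Relation.ReflTransGen.refl
  · exact absurd (T.convex e (Relation.ReflTransGen.single hNQ) hrR hrQ) hrN

end Order

/-! ### Attachments at a change of orientation -/

section Attachments

variable {G : SimpleGraph V}

/-- An attachment of type 1 is impossible on a clique whose left and right vertices enter `Q`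
through two different in-edges: both maximal cliques spanned by the attachment lie beyond `Q`
on the chain of `l1`, and neither may come first. -/
lemma not_attach1 [Finite V] (T : CliqueDPT G) {N₁ N₂ Q : MaxClique G} (h1 : T.D N₁ Q)
    (h2 : T.D N₂ Q) (hne : N₁ ≠ N₂) {Z : Set V} {l1 l2 r1 r2 : V}
    (hl1N : l1 ∈ N₁.1) (hl1Q : l1 ∈ Q.1) (hl2Q : l2 ∈ Q.1)
    (hr1N : r1 ∈ N₂.1) (hr1Q : r1 ∈ Q.1) (hr2Q : r2 ∈ Q.1)
    (hl12 : l1 ≠ l2) (hr12 : r1 ≠ r2) (hl21 : l2 ≠ r1) (hr21 : r2 ≠ l1)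
    (hl2Z : l2 ∉ Z) (hr2Z : r2 ∉ Z) :
    ¬ Attach1 G Z l1 l2 r1 r2 := by
  rintro ⟨z, hz, z', hz', -, -, a1, a2, a3, a4, b1, b2, b3, b4⟩
  have adjQ : ∀ {u v : V}, u ∈ Q.1 → v ∈ Q.1 → u ≠ v → G.Adj u v :=
    fun hu hv h => Q.2.1 hu hv h
  have hrN : r1 ∉ N₁.1 := T.not_mem_of_in h2 h1 hne.symm hr1N
  have hlr : l1 ≠ r1 := fun e => hrN (e ▸ hl1N)
  have c1 := adjQ hl1Q hl2Q hl12
  have c2 := adjQ hr1Q hr2Q hr12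
  have c3 := adjQ hl2Q hr1Q hl21
  have c4 := adjQ hr2Q hl1Q hr21
  have c5 := adjQ hl1Q hr1Q hlr
  obtain ⟨K, hK⟩ := exists_maxClique (G := G) (S := {z, l1, l2, r1}) (by
    simp only [SimpleGraph.isClique_insert, SimpleGraph.isClique_singleton]
    grind [SimpleGraph.adj_comm])
  obtain ⟨K', hK'⟩ := exists_maxClique (G := G) (S := {z', r1, r2, l1}) (by
    simp only [SimpleGraph.isClique_insert, SimpleGraph.isClique_singleton]
    grind [SimpleGraph.adj_comm])
  have zK : z ∈ K.1 := hK (by simp)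
  have l1K : l1 ∈ K.1 := hK (by simp)
  have l2K : l2 ∈ K.1 := hK (by simp)
  have r1K : r1 ∈ K.1 := hK (by simp)
  have zK' : z' ∈ K'.1 := hK' (by simp)
  have l1K' : l1 ∈ K'.1 := hK' (by simp)
  have r1K' : r1 ∈ K'.1 := hK' (by simp)
  have r2K' : r2 ∈ K'.1 := hK' (by simp)
  have r2K : r2 ∉ K.1 := fun h => by
    rcases eq_or_adj_of_mem K zK h with e | e
    · exact hr2Z (e ▸ hz)
    · exact a4 e
  have l2K' : l2 ∉ K'.1 := fun h => by
    rcases eq_or_adj_of_mem K' zK' h with e | e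
    · exact hl2Z (e ▸ hz')
    · exact b4 e
  have hQK : T.Le Q K := T.le_of_not_mem h1 hl1N hl1Q l1K hrN hr1Q r1K
  have hQK' : T.Le Q K' := T.le_of_not_mem h1 hl1N hl1Q l1K' hrN hr1Q r1K'
  rcases T.chain l1K l1K' with h | h
  · exact r2K (T.convex hQK h hr2Q r2K')
  · exact l2K' (T.convex hQK' h hl2Q l2K)

/-- The end clique `K` of an attachment of type 2 (containing `l1` and the first inner vertex
`z`, but not `l2`) cannot lie before the central clique `R`. Otherwise the subtree of `z`
extends from `Q` beyond `N` to `K`; at the edge `S'S` by which the path from `A` to `Q` enters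
this subtree, `hcross` puts `l1` and `l2` into `S'`, which is impossible on the chain of `l1`,
as `K` contains `z` and not `l2`. -/
lemma attach2_end (T : CliqueDPT G) {N Q R K A : MaxClique G} {l1 l2 r z : V}
    (hD : T.D N Q) (hA : OnSide T.tree N Q A) (hzA : z ∉ A.1)
    (hl1N : l1 ∈ N.1) (hl1Q : l1 ∈ Q.1) (hl1R : l1 ∈ R.1) (hl1K : l1 ∈ K.1)
    (hl2Q : l2 ∈ Q.1) (hl2K : l2 ∉ K.1)
    (hrN : r ∉ N.1) (hrQ : r ∈ Q.1) (hrR : r ∈ R.1) (hrK : r ∉ K.1)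
    (hzK : z ∈ K.1) (hzR : z ∈ R.1) (hKR : T.Le K R)
    (hcross : ∀ S' S, T.tree.Adj S' S → OnSide T.tree S' S A → OnSide T.tree S S' Q →
      z ∈ S.1 → l1 ∈ S'.1 ∧ l2 ∈ S'.1) : False := by
  have hQR : T.Le Q R := T.le_of_not_mem hD hl1N hl1Q hl1R hrN hrQ hrR
  have hKQ : T.Le K Q := by
    rcases T.chain hl1K hl1Q with h | h
    · exact h
    · exact absurd (T.convex h hKR hrQ hrR) hrK
  have hKN : T.Le K N := by
    rcases T.le_pred hD hl1N hl1K hKQ with h | h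
    · exact absurd (h ▸ hrQ) hrK
    · exact h
  have hNQ : T.Le N Q := Relation.ReflTransGen.single hD
  have hzQ : z ∈ Q.1 := T.convex hKQ hQR hzK hzR
  have hzN : z ∈ N.1 := T.convex hKN hNQ hzK hzQ
  obtain ⟨p⟩ : (T.tree.deleteEdges {s(N, Q)}).Reachable A N := SimpleGraph.Reachable.symm hA
  obtain ⟨S', S, hS, hzS', hzS, hSA, hr⟩ := exists_first_entry
    (SimpleGraph.deleteEdges_le _) p (fun X => z ∈ X.1) hzA hzN
  have hSQ : OnSide T.tree S S' Q := by
    rcases OnSide.either T.isTree.1 S' S Q with h | h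
    · exact absurd (T.mem_of_sides hS hzQ hzS h (OnSide.refl _ _ _)).1 hzS'
    · exact h
  obtain ⟨h1, h2⟩ := hcross S' S hS hSA hSQ hzS
  have hS'Q : T.Le S' Q := by
    rcases T.chain h1 hl1Q with h | h
    · exact h
    · exact (OnSide.not_both T.isTree.2 (T.dadj _ _ hD)
        (SimpleGraph.Reachable.trans hA hr) (T.onSide_of_le hD h)).elim
  rcases T.chain h1 hl1K with h | h
  · exact hl2K (T.convex h hKQ h2 hl2Q)
  · exact hzS' (T.convex h hS'Q hzK hzQ)

/-- Consider a sequence `z 0, …, z (n+1)` of vertices of `R`, where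
the clique `K k` contains `z k` and `z (k+1)` and none of the others: the cliques `K k` lie
alternately before and behind `R`. -/
lemma alternate (T : CliqueDPT G) {R : MaxClique G} (z : ℕ → V) (K : ℕ → MaxClique G) (n : ℕ)
    (hzR : ∀ k ≤ n + 1, z k ∈ R.1)
    (hzK : ∀ k ≤ n, z k ∈ (K k).1) (hzK' : ∀ k ≤ n, z (k + 1) ∈ (K k).1)
    (hnot : ∀ k ≤ n, ∀ m ≤ n + 1, m ≠ k → m ≠ k + 1 → z m ∉ (K k).1) :
    ∀ k, k < n → (T.Le (K k) R ↔ ¬ T.Le (K (k + 1)) R) := by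
  intro k hk
  have n1 : z k ∉ (K (k + 1)).1 :=
    hnot (k + 1) (by omega) k (by omega) (by omega) (by omega)
  have n2 : z (k + 2) ∉ (K k).1 := hnot k (by omega) (k + 2) (by omega) (by omega) (by omega)
  have m1 := hzK k (by omega)
  have m2 := hzK' k (by omega)
  have m3 := hzK (k + 1) (by omega)
  have m4 : z (k + 2) ∈ (K (k + 1)).1 := hzK' (k + 1) (by omega)
  have r0 := hzR k (by omega)
  have r1 := hzR (k + 1) (by omega)
  have r2 := hzR (k + 2) (by omega)
  constructor
  · intro h h'
    rcases T.chain m2 m3 with c | c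
    · exact n1 (T.convex c h' m1 r0)
    · exact n2 (T.convex c h m4 r2)
  · intro h'
    have h1 := (T.chain m3 r1).resolve_left h'
    by_contra h
    have h0 := (T.chain m2 r1).resolve_left h
    rcases T.chain m2 m3 with c | c
    · exact n2 (T.convex h0 c r2 m4)
    · exact n1 (T.convex h1 c r0 m1)

/-- An attachment of type 2 is impossible on a clique whose left and right vertices enter `Q`
through two different in-edges. By `alternate` and the parity of the number of vertices `z' k`,
exactly one of the two end cliques lies before the central one, contradicting `attach2_end`. -/
lemma not_attach2 [Finite V] (T : CliqueDPT G) {N₁ N₂ Q A B : MaxClique G} (h1 : T.D N₁ Q)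
    (h2 : T.D N₂ Q) (hne : N₁ ≠ N₂) {Z P : Set V} {u v l1 l2 r1 r2 : V}
    (hA : OnSide T.tree N₁ Q A) (hB : OnSide T.tree N₂ Q B)
    (huA : u ∈ A.1) (hvB : v ∈ B.1) (huQ : u ∉ Q.1) (hvQ : v ∉ Q.1) (huP : u ∈ P) (hvP : v ∈ P)
    (hl1N : l1 ∈ N₁.1) (hl1Q : l1 ∈ Q.1) (hl2Q : l2 ∈ Q.1)
    (hr1N : r1 ∈ N₂.1) (hr1Q : r1 ∈ Q.1) (hr2Q : r2 ∈ Q.1)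
    (hl12 : l1 ≠ l2) (hr12 : r1 ≠ r2) (hl21 : l2 ≠ r1) (hr21 : r2 ≠ l1)
    (hZP : ∀ w ∈ P, w ∉ Z) (hl1P : l1 ∈ P) (hl2P : l2 ∈ P) (hr1P : r1 ∈ P) (hr2P : r2 ∈ P)
    (hcrossL : ∀ z ∈ Z, (∀ w ∈ P, G.Adj z w → w = l1 ∨ w = l2 ∨ w = r1 ∨ w = r2) →
      ∀ S' S, T.tree.Adj S' S → OnSide T.tree S' S A → OnSide T.tree S S' Q →
      z ∈ S.1 → l1 ∈ S'.1 ∧ l2 ∈ S'.1)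
    (hcrossR : ∀ z ∈ Z, (∀ w ∈ P, G.Adj z w → w = l1 ∨ w = l2 ∨ w = r1 ∨ w = r2) →
      ∀ S' S, T.tree.Adj S' S → OnSide T.tree S' S B → OnSide T.tree S S' Q →
      z ∈ S.1 → r1 ∈ S'.1 ∧ r2 ∈ S'.1) :
    ¬ Attach2 G Z P l1 l2 r1 r2 := by
  rintro ⟨t, z₀, z', hz0, hzl, hzinj, -, hzZ, hz'Z, hC, hzP, -, hz'⟩
  -- the sequence `z` is extended to all natural numbers
  obtain ⟨z, hz⟩ : ∃ z : ℕ → V, ∀ k (h : k < 2 * t + 3), z₀ ⟨k, h⟩ = z k :=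
    ⟨fun k => if h : k < 2 * t + 3 then z₀ ⟨k, h⟩ else l1, fun k h => by simp [h]⟩
  have z_zero : z 0 = l1 := by rw [← hz0, ← hz 0 (by omega)]; rfl
  have z_last : z (2 * t + 2) = r1 := by rw [← hzl, ← hz _ (by omega)]; rfl
  have z_inj : ∀ k m, k < 2 * t + 3 → m < 2 * t + 3 → k ≠ m → z k ≠ z m := by
    intro k m hk hm hne e
    rw [← hz k hk, ← hz m hm] at e
    exact hne (Fin.mk.inj_iff.mp (hzinj e))
  set C : Set V := {l1, l2, r1, r2} ∪
      {w | ∃ k : Fin (2*t+3), k ≠ 0 ∧ k ≠ Fin.last (2*t+2) ∧ z₀ k = w} with hCdef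
  have z_C : ∀ k, k < 2 * t + 3 → z k ∈ C := by
    intro k hk
    by_cases h0 : k = 0
    · subst h0; rw [z_zero]; simp [hCdef]
    by_cases hl : k = 2 * t + 2
    · subst hl; rw [z_last]; simp [hCdef]
    · refine Or.inr ⟨⟨k, hk⟩, ?_, ?_, hz k hk⟩ <;> simpa [Fin.ext_iff]
  have z_Z : ∀ k, 0 < k → k < 2 * t + 2 → z k ∈ Z := by
    intro k h0 hl
    rw [← hz k (by omega)]
    refine hzZ _ ?_ ?_ <;> simp [Fin.ext_iff] <;> omega
  have z_P : ∀ k, 0 < k → k < 2 * t + 2 → ∀ w ∈ P,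
      G.Adj (z k) w → w = l1 ∨ w = l2 ∨ w = r1 ∨ w = r2 := by
    intro k h0 hl w hw
    rw [← hz k (by omega)]
    refine (hzP _ ?_ ?_ w hw).mp <;> simp [Fin.ext_iff] <;> omega
  have z'_C : ∀ k (h : k < 2 * t + 2), ∀ w ∈ C,
      (G.Adj (z' ⟨k, h⟩) w ↔ w = z k ∨ w = z (k + 1)) := by
    intro k h w hw
    rw [hz' ⟨k, h⟩ w (Or.inr hw), ← hz k (by omega), ← hz (k + 1) (by omega)]
    rfl
  have l1C : l1 ∈ C := by simp [hCdef]
  have l2C : l2 ∈ C := by simp [hCdef]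
  have r1C : r1 ∈ C := by simp [hCdef]
  have r2C : r2 ∈ C := by simp [hCdef]
  have hrN : r1 ∉ N₁.1 := T.not_mem_of_in h2 h1 hne.symm hr1N
  have hlN : l1 ∉ N₂.1 := T.not_mem_of_in h1 h2 hne hl1N
  have ne_z : ∀ w ∈ P, w ≠ l1 → w ≠ r1 → ∀ k, k < 2 * t + 3 → w ≠ z k := by
    intro w hw hwl hwr k hk e
    by_cases h0 : k = 0
    · subst h0; exact hwl (e.trans z_zero)
    by_cases hl : k = 2 * t + 2
    · subst hl; exact hwr (e.trans z_last)
    · exact hZP w hw (e ▸ z_Z k (by omega) (by omega))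
  have l2z := ne_z l2 hl2P hl12.symm hl21
  have r2z := ne_z r2 hr2P hr21 hr12.symm
  -- the vertex `z' k` is adjacent to `z k`, but not to `l2`, hence it is no member of the clique `C`
  have z'_notMem : ∀ k (h : k < 2 * t + 2), z' ⟨k, h⟩ ∉ C := by
    intro k h hmem
    have hn : ¬ G.Adj (z' ⟨k, h⟩) l2 := fun hadj => by
      rcases (z'_C k h l2 l2C).mp hadj with e | e
      · exact l2z k (by omega) e
      · exact l2z (k + 1) (by omega) e
    refine hn (hC hmem l2C fun e => ?_)
    exact hZP l2 hl2P (e ▸ hz'Z ⟨k, h⟩)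
  obtain ⟨R, hR⟩ := exists_maxClique hC
  have hKex : ∀ k, ∃ K : MaxClique G, k < 2 * t + 2 → z k ∈ K.1 ∧ z (k + 1) ∈ K.1 ∧
      ∀ w ∈ C, w ≠ z k → w ≠ z (k + 1) → w ∉ K.1 := by
    intro k
    by_cases h : k < 2 * t + 2
    · have e1 := (z'_C k h (z k) (z_C k (by omega))).mpr (Or.inl rfl)
      have e2 := (z'_C k h (z (k + 1)) (z_C _ (by omega))).mpr (Or.inr rfl)
      have e3 : G.Adj (z k) (z (k + 1)) := hC (z_C k (by omega)) (z_C _ (by omega))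
        (z_inj _ _ (by omega) (by omega) (by omega))
      obtain ⟨K, hK⟩ := exists_maxClique (G := G) (S := {z' ⟨k, h⟩, z k, z (k + 1)}) (by
        simp only [SimpleGraph.isClique_insert, SimpleGraph.isClique_singleton]
        grind)
      refine ⟨K, fun _ => ⟨hK (by simp), hK (by simp), fun w hw hw1 hw2 hwK => ?_⟩⟩
      rcases eq_or_adj_of_mem K (hK (Or.inl rfl) : z' ⟨k, h⟩ ∈ K.1) hwK with e | e
      · exact z'_notMem k h (e ▸ hw)
      · exact ((z'_C k h w hw).mp e).elim hw1 hw2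
    · exact ⟨R, fun h' => absurd h' h⟩
  choose K hK using hKex
  have halt := alternate T (R := R) z K (2 * t + 1) (fun k hk => hR (z_C k (by omega)))
    (fun k hk => (hK k (by omega)).1) (fun k hk => (hK k (by omega)).2.1)
    (fun k hk m hm h h' => (hK k (by omega)).2.2 _ (z_C m (by omega))
      (z_inj _ _ (by omega) (by omega) h) (z_inj _ _ (by omega) (by omega) h'))
  have hpar : ∀ m, m ≤ t → (T.Le (K 0) R ↔ ¬ T.Le (K (2 * m + 1)) R) := by
    intro m
    induction m with
    | zero => exact fun _ => halt 0 (by omega)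
    | succ m ih =>
      intro hm
      rw [ih (by omega), halt (2 * m + 1) (by omega), halt (2 * m + 2) (by omega)]
      simp only [not_not]
      rfl
  -- an inner vertex `z k` belongs to no clique of `u` or `v`
  have not_end : ∀ (w : V) (X : MaxClique G), w ∈ P → w ∉ Q.1 → w ∈ X.1 →
      ∀ k, 0 < k → k < 2 * t + 2 → z k ∉ X.1 := by
    intro w X hwP hwQ hwX k h0 hl hzX
    rcases eq_or_adj_of_mem X hzX hwX with e | e
    · exact hZP w hwP (e ▸ z_Z k h0 hl)
    · rcases z_P k h0 hl w hwP e with rfl | rfl | rfl | rfl <;> contradiction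
  by_cases hin : T.Le (K 0) R
  · obtain ⟨k1, k2, k3⟩ := hK 0 (by omega)
    rw [z_zero] at k1 k3
    rw [zero_add] at k2 k3
    exact attach2_end T h1 hA (not_end u A huP huQ huA 1 (by omega) (by omega)) hl1N hl1Q
      (hR l1C) k1 hl2Q (k3 l2 l2C hl12.symm (l2z 1 (by omega))) hrN hr1Q (hR r1C)
      (k3 r1 r1C (fun e => hrN (e ▸ hl1N))
        (z_last ▸ z_inj _ _ (by omega) (by omega) (by omega)))
      k2 (hR (z_C 1 (by omega))) hin
      (hcrossL _ (z_Z 1 (by omega) (by omega)) (z_P 1 (by omega) (by omega)))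
  · have hin' : T.Le (K (2 * t + 1)) R := not_not.mp fun h => hin ((hpar t le_rfl).mpr h)
    obtain ⟨k1, k2, k3⟩ := hK (2 * t + 1) (by omega)
    rw [show 2 * t + 1 + 1 = 2 * t + 2 from rfl, z_last] at k2 k3
    exact attach2_end T h2 hB (not_end v B hvP hvQ hvB (2 * t + 1) (by omega) (by omega)) hr1N
      hr1Q (hR r1C) k2 hr2Q (k3 r2 r2C (r2z _ (by omega)) hr12.symm) hlN hl1Q (hR l1C)
      (k3 l1 l1C (z_zero ▸ z_inj _ _ (by omega) (by omega) (by omega))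
        (fun e => hrN (e ▸ hl1N)))
      k1 (hR (z_C _ (by omega))) hin'
      (hcrossR _ (z_Z _ (by omega) (by omega)) (z_P _ (by omega) (by omega)))

end Attachments

/-! ### Strong paths -/

section Paths

variable {G : SimpleGraph V}

/-- The values `f 0, …, f (r+1)` form a chordless path from `u` to `v`; the other values of `f`
are irrelevant. -/
structure IsPathSeq (G : SimpleGraph V) (r : ℕ) (f : ℕ → V) (u v : V) : Prop where
  zero : f 0 = u
  last : f (r + 1) = v
  inj : ∀ i j, i ≤ r + 1 → j ≤ r + 1 → f i = f j → i = j
  adj : ∀ i j, i < j → j ≤ r + 1 → (G.Adj (f i) (f j) ↔ j = i + 1)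

lemma exists_pathSeq {r : ℕ} {x : Fin (r + 2) → V} {u v : V} (hx : IsChordlessPathFun G x)
    (h0 : x 0 = u) (hl : x (Fin.last (r + 1)) = v) :
    ∃ f : ℕ → V, IsPathSeq G r f u v ∧ ∀ k (h : k < r + 2), x ⟨k, h⟩ = f k := by
  obtain ⟨f, hf⟩ : ∃ f : ℕ → V, ∀ k (h : k < r + 2), x ⟨k, h⟩ = f k :=
    ⟨fun k => if h : k < r + 2 then x ⟨k, h⟩ else u, fun k h => by simp [h]⟩
  refine ⟨f, ⟨?_, ?_, fun i j hi hj e => ?_, fun i j hij hj => ?_⟩, hf⟩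
  · rw [← h0, ← hf 0 (by omega)]; rfl
  · rw [← hl, ← hf _ (by omega)]; rfl
  · rw [← hf i (by omega), ← hf j (by omega)] at e
    exact Fin.mk.inj_iff.mp (hx.1 e)
  · rw [← hf i (by omega), ← hf j (by omega)]
    exact hx.2 ⟨i, by omega⟩ ⟨j, by omega⟩ hij

lemma IsPathSeq.exists_node [Finite V] {r : ℕ} {f : ℕ → V} {u v : V}
    (hf : IsPathSeq G r f u v) {k : ℕ} (hk : k < r + 1) :
    ∃ X : MaxClique G, f k ∈ X.1 ∧ f (k + 1) ∈ X.1 :=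
  exists_node_of_adj ((hf.adj k (k + 1) (by omega) (by omega)).mpr rfl)

/-- A clique contains at most two vertices of a chordless path, and these are consecutive. -/
lemma IsPathSeq.close {r : ℕ} {f : ℕ → V} {u v : V} (hf : IsPathSeq G r f u v)
    (Q : MaxClique G) {i j : ℕ} (hij : i < j) (hj : j ≤ r + 1) (hi : f i ∈ Q.1)
    (hj' : f j ∈ Q.1) : j = i + 1 := by
  refine (hf.adj i j hij hj).mp (Q.2.1 hi hj' fun e => ?_)
  have := hf.inj i j (by omega) hj e
  omega

/-- If `Q` is a node at which the orientation changes on the way from `u` to `v`, then a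
chordless path from `u` to `v` changes there from one in-edge of `Q` to the other one with two
consecutive inner vertices. -/
lemma IsPathSeq.turn [Finite V] (T : CliqueDPT G) {N₁ N₂ Q A B : MaxClique G} (h1 : T.D N₁ Q)
    (h2 : T.D N₂ Q) (hne : N₁ ≠ N₂) {r : ℕ} {f : ℕ → V} {u v : V} (hf : IsPathSeq G r f u v)
    (huA : u ∈ A.1) (hvB : v ∈ B.1) (huQ : u ∉ Q.1) (hvQ : v ∉ Q.1)
    (hA : OnSide T.tree N₁ Q A) (hA' : OnSide T.tree Q N₂ A) (hB : OnSide T.tree N₂ Q B) :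
    ∃ i, 1 ≤ i ∧ i + 1 ≤ r ∧ f i ∈ N₁.1 ∧ f i ∈ Q.1 ∧ f (i + 1) ∈ N₂.1 ∧ f (i + 1) ∈ Q.1 := by
  obtain ⟨m', -, hm', hmQ', hmN'⟩ := T.exists_cross (T.dadj _ _ h2).symm f
    (Nat.zero_le (r + 1)) (fun k _ hk => hf.exists_node hk) (hf.zero ▸ huA) (hf.last ▸ hvB)
    hA' hB
  obtain ⟨m, -, hm, hmN, hmQ⟩ := T.exists_cross (T.dadj _ _ h1) f (Nat.zero_le m')
    (fun k _ hk => hf.exists_node (by omega)) (hf.zero ▸ huA) hmQ' hA (OnSide.refl _ _ _)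
  have hne' : m ≠ m' := fun e => T.not_mem_of_in h1 h2 hne hmN (e ▸ hmN')
  obtain rfl := hf.close Q (lt_of_le_of_ne hm hne') hm' hmQ hmQ'
  have hm0 : m ≠ 0 := fun e => huQ (by rwa [e, hf.zero] at hmQ)
  have hml : m ≠ r := fun e => hvQ (by rwa [e, hf.last] at hmQ')
  exact ⟨m, by omega, by omega, hmN, hmQ, hmN', hmQ'⟩

lemma IsPathSeq.mem_left [Finite V] (T : CliqueDPT G) {S' S Q A : MaxClique G} {r i : ℕ}
    {f : ℕ → V} {u v : V} (hf : IsPathSeq G r f u v) (hi : i ≤ r + 1) (huA : u ∈ A.1)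
    (hS : T.tree.Adj S' S) (hA : OnSide T.tree S' S A) (hQ : OnSide T.tree S S' Q)
    (hiQ : f i ∈ Q.1) (h : ∀ m ≤ i, f m ∈ S.1 → m = i) : f i ∈ S'.1 := by
  obtain ⟨m, -, hm, hmS', hmS⟩ := T.exists_cross hS f (Nat.zero_le i)
    (fun k _ hk => hf.exists_node (by omega)) (hf.zero ▸ huA) hiQ hA hQ
  exact h m hm hmS ▸ hmS'

lemma IsPathSeq.mem_right [Finite V] (T : CliqueDPT G) {S' S Q B : MaxClique G} {r i : ℕ}
    {f : ℕ → V} {u v : V} (hf : IsPathSeq G r f u v) (hi : i ≤ r + 1) (hvB : v ∈ B.1)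
    (hS : T.tree.Adj S' S) (hB : OnSide T.tree S' S B) (hQ : OnSide T.tree S S' Q)
    (hiQ : f i ∈ Q.1) (h : ∀ m, i ≤ m → m ≤ r + 1 → f m ∈ S.1 → m = i) : f i ∈ S'.1 := by
  obtain ⟨m, hm, hm', hmS, hmS'⟩ := T.exists_cross hS.symm f hi
    (fun k _ hk => hf.exists_node (by omega)) hiQ (hf.last ▸ hvB) hQ hB
  exact h m hm hm' hmS ▸ hmS'

/-- Vertices linked by a strong path are not separated by a node `Q` that is entered by both of
its tree edges pointing towards these vertices. -/
lemma not_linked_of_in [Finite V] (T : CliqueDPT G) {N₁ N₂ Q A B : MaxClique G} (h1 : T.D N₁ Q)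
    (h2 : T.D N₂ Q) (hne : N₁ ≠ N₂) {u v : V}
    (huA : u ∈ A.1) (hvB : v ∈ B.1) (huQ : u ∉ Q.1) (hvQ : v ∉ Q.1)
    (hA : OnSide T.tree N₁ Q A) (hA' : OnSide T.tree Q N₂ A)
    (hB : OnSide T.tree N₂ Q B) (hB' : OnSide T.tree Q N₁ B) :
    ¬ LinkedByStrongPath G u v := by
  rintro (⟨w, huw, hvw⟩ | ⟨r, s, -, -, x, y, Z, hx0, hxl, hy0, hyl, hx, hy, hdis, hZ, hatt⟩)
  · -- a common neighbour would contain both edges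
    have hp : ∀ t ∈ (SimpleGraph.Walk.cons huw (SimpleGraph.Walk.cons hvw.symm
        SimpleGraph.Walk.nil)).support, t ∈ Q.1 → t = w := by
      intro t ht htQ
      simp only [SimpleGraph.Walk.support_cons, SimpleGraph.Walk.support_nil, List.mem_cons,
        List.not_mem_nil, or_false] at ht
      rcases ht with rfl | rfl | rfl
      · exact absurd htQ huQ
      · rfl
      · exact absurd htQ hvQ
    obtain ⟨t, ht, htN, htQ⟩ := T.exists_cross_walk (T.dadj _ _ h1) _ huA hvB hA hB'
    obtain ⟨t', ht', htQ', htN'⟩ := T.exists_cross_walk (T.dadj _ _ h2).symm _ huA hvB hA' hB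
    rw [hp t ht htQ] at htN
    rw [hp t' ht' htQ'] at htN'
    exact T.not_mem_of_in h1 h2 hne htN htN'
  obtain ⟨f, hf, hxf⟩ := exists_pathSeq hx hx0 hxl
  obtain ⟨g, hg, hyg⟩ := exists_pathSeq hy hy0 hyl
  obtain ⟨i, hi1, hir, fiN, fiQ, fiN', fiQ'⟩ := hf.turn T h1 h2 hne huA hvB huQ hvQ hA hA' hB
  obtain ⟨j, hj1, hjs, gjN, gjQ, gjN', gjQ'⟩ := hg.turn T h1 h2 hne huA hvB huQ hvQ hA hA' hB
  have hfg : ∀ m n, m ≤ r + 1 → 1 ≤ n → n ≤ s → f m ≠ g n := by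
    intro m n hm hn hn' e
    by_cases hm0 : m = 0
    · subst hm0
      have := hg.inj 0 n (by omega) (by omega) (by rw [hg.zero, ← hf.zero, e])
      omega
    by_cases hml : m = r + 1
    · subst hml
      have := hg.inj (s + 1) n (by omega) (by omega) (by rw [hg.last, ← hf.last, e])
      omega
    refine hdis ⟨m, by omega⟩ ?_ ?_ ⟨n, by omega⟩ ?_ ?_ (by rw [hxf, hyg, e]) <;>
      simp [Fin.ext_iff] <;> omega
  have hgf : ∀ m n, n ≤ s + 1 → 1 ≤ m → m ≤ r → f m ≠ g n := by
    intro m n hn hm hm' e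
    by_cases hn0 : n = 0
    · subst hn0
      have := hf.inj 0 m (by omega) (by omega) (by rw [hf.zero, ← hg.zero, e])
      omega
    by_cases hnl : n = s + 1
    · subst hnl
      have := hf.inj (r + 1) m (by omega) (by omega) (by rw [hf.last, ← hg.last, e])
      omega
    exact hfg m n (by omega) (by omega) (by omega) e
  set P : Set V := Set.range x ∪ Set.range y with hP
  have fP : ∀ k, k ≤ r + 1 → f k ∈ P := fun k hk => Or.inl ⟨⟨k, by omega⟩, hxf k _⟩
  have gP : ∀ k, k ≤ s + 1 → g k ∈ P := fun k hk => Or.inr ⟨⟨k, by omega⟩, hyg k _⟩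
  have hZP : ∀ w ∈ P, w ∉ Z := fun w hw hwZ =>
    (Set.eq_empty_iff_forall_notMem.mp hZ) w ⟨hwZ, hw⟩
  have c1 := hfg i j (by omega) (by omega) (by omega)
  have c2 := hfg i (j + 1) (by omega) (by omega) (by omega)
  have c3 := hfg (i + 1) j (by omega) (by omega) (by omega)
  have c4 := hfg (i + 1) (j + 1) (by omega) (by omega) (by omega)
  have c5 : f i ≠ f (i + 1) := fun e => by
    have := hf.inj _ _ (by omega) (by omega) e
    omega
  have c6 : g j ≠ g (j + 1) := fun e => by
    have := hg.inj _ _ (by omega) (by omega) e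
    omega
  have hatt' := hatt i j hi1 hir hj1 hjs
  simp only [hxf, hyg] at hatt'
  obtain ⟨l1, l2, r1, r2, hl, hr, h⟩ := hatt' (Q.2.1 fiQ gjQ c1) (Q.2.1 fiQ gjQ' c2)
    (Q.2.1 fiQ' gjQ c3) (Q.2.1 fiQ' gjQ' c4)
  -- a vertex `z` with these neighbours meets the paths only in the four given vertices
  have near : ∀ z ∈ Z,
      (∀ w ∈ P, G.Adj z w → w = f i ∨ w = g j ∨ w = f (i + 1) ∨ w = g (j + 1)) →
      ∀ S : MaxClique G, z ∈ S.1 →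
      (∀ m ≤ r + 1, f m ∈ S.1 → m = i ∨ m = i + 1) ∧
      (∀ n ≤ s + 1, g n ∈ S.1 → n = j ∨ n = j + 1) := by
    intro z hz hzadj S hzS
    constructor
    · intro m hm hmS
      rcases eq_or_adj_of_mem S hzS hmS with e | e
      · exact absurd (e ▸ hz) (hZP _ (fP m hm))
      rcases hzadj _ (fP m hm) e with e | e | e | e
      · exact Or.inl (hf.inj _ _ hm (by omega) e)
      · exact absurd e (hfg m j hm (by omega) (by omega))
      · exact Or.inr (hf.inj _ _ hm (by omega) e)
      · exact absurd e (hfg m (j + 1) hm (by omega) (by omega))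
    · intro n hn hnS
      rcases eq_or_adj_of_mem S hzS hnS with e | e
      · exact absurd (e ▸ hz) (hZP _ (gP n hn))
      rcases hzadj _ (gP n hn) e with e | e | e | e
      · exact absurd e.symm (hgf i n hn (by omega) (by omega))
      · exact Or.inl (hg.inj _ _ hn (by omega) e)
      · exact absurd e.symm (hgf (i + 1) n hn (by omega) (by omega))
      · exact Or.inr (hg.inj _ _ hn (by omega) e)
  have hcL : ∀ z ∈ Z,
      (∀ w ∈ P, G.Adj z w → w = f i ∨ w = g j ∨ w = f (i + 1) ∨ w = g (j + 1)) →
      ∀ S' S, T.tree.Adj S' S → OnSide T.tree S' S A → OnSide T.tree S S' Q →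
      z ∈ S.1 → f i ∈ S'.1 ∧ g j ∈ S'.1 := by
    intro z hz hzadj S' S hS hSA hSQ hzS
    obtain ⟨n1, n2⟩ := near z hz hzadj S hzS
    exact ⟨hf.mem_left T (by omega) huA hS hSA hSQ fiQ fun m hm hmS => by
        have := n1 m (by omega) hmS
        omega,
      hg.mem_left T (by omega) huA hS hSA hSQ gjQ fun m hm hmS => by
        have := n2 m (by omega) hmS
        omega⟩
  have hcR : ∀ z ∈ Z,
      (∀ w ∈ P, G.Adj z w → w = f i ∨ w = g j ∨ w = f (i + 1) ∨ w = g (j + 1)) →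
      ∀ S' S, T.tree.Adj S' S → OnSide T.tree S' S B → OnSide T.tree S S' Q →
      z ∈ S.1 → f (i + 1) ∈ S'.1 ∧ g (j + 1) ∈ S'.1 := by
    intro z hz hzadj S' S hS hSB hSQ hzS
    obtain ⟨n1, n2⟩ := near z hz hzadj S hzS
    exact ⟨hf.mem_right T (by omega) hvB hS hSB hSQ fiQ' fun m hm hm' hmS => by
        have := n1 m (by omega) hmS
        omega,
      hg.mem_right T (by omega) hvB hS hSB hSQ gjQ' fun m hm hm' hmS => by
        have := n2 m (by omega) hmS
        omega⟩
  have p1 := fP i (by omega)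
  have p2 := gP j (by omega)
  have p3 := fP (i + 1) (by omega)
  have p4 := gP (j + 1) (by omega)
  have hl1 : l1 ∈ N₁.1 ∧ l1 ∈ Q.1 ∧ l2 ∈ Q.1 ∧ l1 ∈ P ∧ l2 ∈ P ∧ l1 ≠ l2 := by
    rcases hl with ⟨rfl, rfl⟩ | ⟨rfl, rfl⟩
    · exact ⟨fiN, fiQ, gjQ, p1, p2, c1⟩
    · exact ⟨gjN, gjQ, fiQ, p2, p1, c1.symm⟩
  have hr1 : r1 ∈ N₂.1 ∧ r1 ∈ Q.1 ∧ r2 ∈ Q.1 ∧ r1 ∈ P ∧ r2 ∈ P ∧ r1 ≠ r2 := by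
    rcases hr with ⟨rfl, rfl⟩ | ⟨rfl, rfl⟩
    · exact ⟨fiN', fiQ', gjQ', p3, p4, c4⟩
    · exact ⟨gjN', gjQ', fiQ', p4, p3, c4.symm⟩
  have hlr : l2 ≠ r1 ∧ r2 ≠ l1 := by
    rcases hl with ⟨rfl, rfl⟩ | ⟨rfl, rfl⟩ <;> rcases hr with ⟨rfl, rfl⟩ | ⟨rfl, rfl⟩ <;>
      constructor <;> first | assumption | (apply Ne.symm; assumption)
  obtain ⟨a1, a2, a3, a4, a5, a6⟩ := hl1
  obtain ⟨b1, b2, b3, b4, b5, b6⟩ := hr1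
  have hset : ∀ w, (w = l1 ∨ w = l2 ∨ w = r1 ∨ w = r2) →
      w = f i ∨ w = g j ∨ w = f (i + 1) ∨ w = g (j + 1) := by
    clear * - hl hr
    intro w hw
    rcases hl with ⟨rfl, rfl⟩ | ⟨rfl, rfl⟩ <;> rcases hr with ⟨rfl, rfl⟩ | ⟨rfl, rfl⟩ <;>
      rcases hw with e | e | e | e <;> simp [e]
  rcases h with h | h
  · exact not_attach1 T h1 h2 hne a1 a2 a3 b1 b2 b3 a6 b6 hlr.1 hlr.2 (hZP _ a5) (hZP _ b5) h
  · refine not_attach2 T h1 h2 hne hA hB huA hvB huQ hvQ (hf.zero ▸ fP 0 (by omega))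
      (hf.last ▸ fP (r + 1) le_rfl) a1 a2 a3 b1 b2 b3 a6 b6 hlr.1 hlr.2 hZP a4 a5 b4 b5
      ?_ ?_ h
    · intro z hz hzadj S' S hS hSA hSQ hzS
      have := hcL z hz (fun w hw hadj => hset w (hzadj w hw hadj)) S' S hS hSA hSQ hzS
      rcases hl with ⟨rfl, rfl⟩ | ⟨rfl, rfl⟩
      · exact this
      · exact this.symm
    · intro z hz hzadj S' S hS hSA hSQ hzS
      have := hcR z hz (fun w hw hadj => hset w (hzadj w hw hadj)) S' S hS hSA hSQ hzS
      rcases hr with ⟨rfl, rfl⟩ | ⟨rfl, rfl⟩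
      · exact this
      · exact this.symm

/-- `not_linked_of_in`, also for the opposite orientation. -/
lemma not_linked [Finite V] (T : CliqueDPT G) {N₁ N₂ Q A B : MaxClique G}
    (h : T.D N₁ Q ∧ T.D N₂ Q ∨ T.D Q N₁ ∧ T.D Q N₂) (hne : N₁ ≠ N₂) {u v : V}
    (huA : u ∈ A.1) (hvB : v ∈ B.1) (huQ : u ∉ Q.1) (hvQ : v ∉ Q.1)
    (hA : OnSide T.tree N₁ Q A) (hA' : OnSide T.tree Q N₂ A)
    (hB : OnSide T.tree N₂ Q B) (hB' : OnSide T.tree Q N₁ B) :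
    ¬ LinkedByStrongPath G u v := by
  rcases h with ⟨h1, h2⟩ | ⟨h1, h2⟩
  · exact not_linked_of_in T h1 h2 hne huA hvB huQ hvQ hA hA' hB hB'
  · exact not_linked_of_in T.rev h1 h2 hne huA hvB huQ hvQ hA hA' hB hB'

end Paths

/-! ### Asteroidal triples -/

section Median

variable {G : SimpleGraph V}

/-- If `M` lies between a clique of `b` and a clique of `c`, and some walk from `b` to `c` avoids
the closed neighbourhood of `a`, then `a` is not in `M`. -/
lemma notMem_of_between [Finite V] (T : CliqueTree G) {a b c : V} {B C M : MaxClique G}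
    (hbB : b ∈ B.1) (hcC : c ∈ C.1) (p : G.Walk b c)
    (hp : ∀ x ∈ p.support, x ≠ a ∧ ¬ G.Adj a x)
    (hM : ∀ M', T.tree.Adj M M' →
      ¬ (T.tree.dist B M' < T.tree.dist B M ∧ T.tree.dist C M' < T.tree.dist C M)) :
    a ∉ M.1 := by
  intro haM
  have key : ∀ x ∈ p.support, x ∉ M.1 := by
    intro x hx hxM
    rcases eq_or_adj_of_mem M haM hxM with e | e
    · exact (hp x hx).1 e.symm
    · exact (hp x hx).2 e
  by_cases hMB : M = B
  · exact key b p.start_mem_support (hMB ▸ hbB)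
  by_cases hMC : M = C
  · exact key c p.end_mem_support (hMC ▸ hcC)
  obtain ⟨X, hX, hXd, q, hq⟩ := exists_next T.isTree.1 hMB
  obtain ⟨Y, hY, hYd, q', hq'⟩ := exists_next T.isTree.1 hMC
  have hXY : X ≠ Y := fun e => hM X hX ⟨hXd, e ▸ hYd⟩
  obtain ⟨w, hw, -, hwM⟩ := T.exists_cross_walk hX.symm p hbB hcC
    ((OnSide.refl _ _ _).of_walk (Or.inr rfl) q hq)
    (((OnSide.refl _ _ _).step hY (by
      simpa [Sym2.eq_iff, hX.ne] using hXY.symm)).of_walk (Or.inl rfl) q' hq')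
  exact key w hw hwM

end Median

/-- A directed path graph contains no strong asteroidal triple. -/
theorem directedPathGraph_no_strong_asteroidal_triple [Fintype V] (G : SimpleGraph V)
    (hG : DirectedPathGraph G) :
    ∀ a b c : V, ¬ IsStrongAsteroidalTriple G a b c := by
  obtain ⟨T⟩ := hG
  rintro a b c ⟨⟨-, -, -, -, -, -, ⟨pab, hab⟩, ⟨pbc, hbc⟩, ⟨pac, hac⟩⟩, lab, lbc, lac⟩
  have node : ∀ w : V, ∃ K : MaxClique G, w ∈ K.1 := fun w => by
    obtain ⟨K, hK⟩ := exists_maxClique (G := G) (S := {w}) (by simp)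
    exact ⟨K, hK rfl⟩
  obtain ⟨A, hA⟩ := node a
  obtain ⟨B, hB⟩ := node b
  obtain ⟨C, hC⟩ := node c
  obtain ⟨M, hM⟩ := exists_median T.isTree.1 A B C
  have haM := notMem_of_between T.toCliqueTree hB hC pbc hbc fun M' h => (hM M' h).2.2
  have hbM := notMem_of_between T.toCliqueTree hA hC pac hac fun M' h => (hM M' h).2.1
  have hcM := notMem_of_between T.toCliqueTree hA hB pab hab fun M' h => (hM M' h).1
  obtain ⟨X, hX, hXd, p, hp⟩ := exists_next T.isTree.1 (fun e => haM (e ▸ hA) : M ≠ A)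
  obtain ⟨Y, hY, hYd, q, hq⟩ := exists_next T.isTree.1 (fun e => hbM (e ▸ hB) : M ≠ B)
  obtain ⟨W, hW, hWd, s, hs⟩ := exists_next T.isTree.1 (fun e => hcM (e ▸ hC) : M ≠ C)
  have hXY : X ≠ Y := fun e => (hM X hX).1 ⟨hXd, e ▸ hYd⟩
  have hXW : X ≠ W := fun e => (hM X hX).2.1 ⟨hXd, e ▸ hWd⟩
  have hYW : Y ≠ W := fun e => (hM Y hY).2.2 ⟨hYd, e ▸ hWd⟩
  have near : ∀ {X K : MaxClique G} (p : T.tree.Walk X K), M ∉ p.support →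
      OnSide T.tree X M K := fun p hp => (OnSide.refl _ _ _).of_walk (Or.inr rfl) p hp
  have far : ∀ {X Y K : MaxClique G} (p : T.tree.Walk X K), M ∉ p.support → T.tree.Adj M X →
      X ≠ Y → OnSide T.tree M Y K := fun p hp hX hne =>
    ((OnSide.refl _ _ _).step hX fun e => (Sym2.eq_iff.mp e).elim (fun h => hne h.2)
      fun h => hX.ne h.2.symm).of_walk (Or.inl rfl) p hp
  have nab : ¬ (T.D X M ∧ T.D Y M ∨ T.D M X ∧ T.D M Y) := fun h =>
    not_linked T h hXY hA hB haM hbM (near p hp) (far p hp hX hXY) (near q hq)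
      (far q hq hY hXY.symm) lab
  have nbc : ¬ (T.D Y M ∧ T.D W M ∨ T.D M Y ∧ T.D M W) := fun h =>
    not_linked T h hYW hB hC hbM hcM (near q hq) (far q hq hY hYW) (near s hs)
      (far s hs hW hYW.symm) lbc
  have nac : ¬ (T.D X M ∧ T.D W M ∨ T.D M X ∧ T.D M W) := fun h =>
    not_linked T h hXW hA hC haM hcM (near p hp) (far p hp hX hXW) (near s hs)
      (far s hs hW hXW.symm) lac
  -- two of the three edges at `M` are oriented alike
  rcases T.total _ _ hX with x | x <;> rcases T.total _ _ hY with y | y <;>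
    rcases T.total _ _ hW with w | w
  · exact nab (Or.inr ⟨x, y⟩)
  · exact nab (Or.inr ⟨x, y⟩)
  · exact nac (Or.inr ⟨x, w⟩)
  · exact nbc (Or.inl ⟨y, w⟩)
  · exact nbc (Or.inr ⟨y, w⟩)
  · exact nac (Or.inl ⟨x, w⟩)
  · exact nab (Or.inl ⟨x, y⟩)
  · exact nab (Or.inl ⟨x, y⟩)
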